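/- Gaussian two-point function (the propagator): for all indices i, j, ∫ xᵢ·xⱼ·exp(−(1/2)·⟨x, Q·x⟩) dx = (2π)^{n/2} · (det Q)^{−1/2} · (Q⁻¹)ᵢⱼ. -/

import Mathlib

open Matrix MeasureTheory Real

theorem integrable_pow_mul_exp_neg_half_sq (k : ℕ) :
    Integrable fun t : ℝ => t ^ k * exp (-(1 / 2) * t ^ 2) := by
  simpa using integrable_rpow_mul_exp_neg_mul_sq (b := 1 / 2) (by norm_num) (s := k)
    (by linarith [k.cast_nonneg (α := ℝ)])

theorem integral_pow_zero_mul_exp_neg_half_sq :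
    ∫ t : ℝ, t ^ 0 * exp (-(1 / 2) * t ^ 2) = √(2 * π) := by
  simp_rw [pow_zero, one_mul, integral_gaussian]
  congr 1
  ring

theorem integral_pow_one_mul_exp_neg_half_sq :
    ∫ t : ℝ, t ^ 1 * exp (-(1 / 2) * t ^ 2) = 0 := by
  have h := integral_neg_eq_self (fun t : ℝ => t ^ 1 * exp (-(1 / 2) * t ^ 2)) volume
  simp only [pow_one, neg_mul, neg_sq, integral_neg] at h ⊢
  linarith

theorem integral_pow_two_mul_exp_neg_half_sq :
    ∫ t : ℝ, t ^ 2 * exp (-(1 / 2) * t ^ 2) = √(2 * π) := by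
  have h := ProbabilityTheory.variance_id_gaussianReal (μ := 0) (v := 1)
  rw [ProbabilityTheory.variance_eq_integral aemeasurable_id,
    ProbabilityTheory.integral_gaussianReal_eq_integral_smul one_ne_zero] at h
  have h0 : √(2 * π) ≠ 0 := by positivity
  simp only [id, ProbabilityTheory.integral_id_gaussianReal, ProbabilityTheory.gaussianPDFReal,
    sub_zero, NNReal.coe_one, mul_one, smul_eq_mul, mul_assoc, integral_const_mul] at h
  rw [inv_mul_eq_iff_eq_mul₀ (by positivity), mul_one] at h
  rw [← h]
  congr with t
  rw [mul_comm]
  congr 2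
  ring

theorem mul_mul_exp_neg_half_dotProduct {ι : Type*} [Fintype ι] [DecidableEq ι] (k l : ι)
    (y : ι → ℝ) :
    y k * y l * exp (-(1 / 2) * (y ⬝ᵥ y)) =
      ∏ m, y m ^ ((if m = k then 1 else 0) + (if m = l then 1 else 0)) *
        exp (-(1 / 2) * y m ^ 2) := by
  simp_rw [pow_add, Finset.prod_mul_distrib, ← exp_sum, ← Finset.mul_sum]
  simp [pow_ite, dotProduct, sq]

theorem integrable_mul_mul_exp_neg_half_dotProduct {ι : Type*} [Fintype ι] (k l : ι) :
    Integrable fun y : ι → ℝ => y k * y l * exp (-(1 / 2) * (y ⬝ᵥ y)) := by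
  classical
  simp_rw [mul_mul_exp_neg_half_dotProduct]
  exact Integrable.fintype_prod fun m => integrable_pow_mul_exp_neg_half_sq _

theorem integral_mul_mul_exp_neg_half_dotProduct {ι : Type*} [Fintype ι] [DecidableEq ι]
    (k l : ι) :
    ∫ y : ι → ℝ, y k * y l * exp (-(1 / 2) * (y ⬝ᵥ y)) =
      √(2 * π) ^ Fintype.card ι * (1 : Matrix ι ι ℝ) k l := by
  simp_rw [mul_mul_exp_neg_half_dotProduct]
  rw [integral_fintype_prod_volume_eq_prod (fun m t =>
    t ^ ((if m = k then 1 else 0) + (if m = l then 1 else 0)) * exp (-(1 / 2) * t ^ 2))]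
  rcases eq_or_ne k l with rfl | hkl
  · rw [one_apply_eq, mul_one, ← Finset.card_univ, ← Finset.prod_const]
    refine Finset.prod_congr rfl fun m _ => ?_
    split_ifs
    · exact integral_pow_two_mul_exp_neg_half_sq
    · exact integral_pow_zero_mul_exp_neg_half_sq
  · rw [one_apply_ne hkl, mul_zero]
    refine Finset.prod_eq_zero (Finset.mem_univ k) ?_
    rw [if_pos rfl, if_neg hkl]
    exact integral_pow_one_mul_exp_neg_half_sq

theorem integral_mulVec_mul_mulVec_mul_exp_neg_half_dotProduct {ι : Type*} [Fintype ι]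
    (B : Matrix ι ι ℝ) (i j : ι) :
    ∫ y : ι → ℝ, (B *ᵥ y) i * (B *ᵥ y) j * exp (-(1 / 2) * (y ⬝ᵥ y)) =
      √(2 * π) ^ Fintype.card ι * (B * Bᵀ) i j := by
  classical
  have h (y : ι → ℝ) : (B *ᵥ y) i * (B *ᵥ y) j * exp (-(1 / 2) * (y ⬝ᵥ y)) =
      ∑ k, ∑ l, B i k * B j l * (y k * y l * exp (-(1 / 2) * (y ⬝ᵥ y))) := by
    simp_rw [mulVec, dotProduct, Finset.sum_mul_sum, Finset.sum_mul]
    exact Finset.sum_congr rfl fun k _ => Finset.sum_congr rfl fun l _ => by ring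
  have hint (k l : ι) := (integrable_mul_mul_exp_neg_half_dotProduct k l).const_mul (B i k * B j l)
  simp_rw [h]
  rw [integral_finsetSum _ fun k _ => integrable_finsetSum _ fun l _ => hint k l]
  simp_rw [integral_finsetSum _ fun l _ => hint _ l, integral_const_mul,
    integral_mul_mul_exp_neg_half_dotProduct]
  simp [mul_apply, one_apply, Finset.mul_sum, mul_comm]

theorem integral_comp_mulVec {ι : Type*} [Fintype ι] [DecidableEq ι] {A : Matrix ι ι ℝ}
    (hA : A.det ≠ 0) (f : (ι → ℝ) → ℝ) :
    ∫ x, f (A *ᵥ x) = |A.det|⁻¹ * ∫ y, f y := by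
  have hemb : MeasurableEmbedding (toLin' A) :=
    (LinearEquiv.toContinuousLinearEquiv (LinearEquiv.ofIsUnitDet
      (f := toLin' A) (v := Pi.basisFun ℝ ι) (v' := Pi.basisFun ℝ ι)
      (by simpa [LinearMap.toMatrix_eq_toMatrix'] using hA))).toHomeomorph.measurableEmbedding
  have h := hemb.integral_map (μ := volume) f
  rw [Real.map_matrix_volume_pi_eq_smul_volume_pi hA, integral_smul_measure,
    ENNReal.toReal_ofReal (abs_nonneg _), abs_inv] at h
  exact h.symm

/-- **Gaussian two-point function (the propagator).**
Let `Q` be a real symmetric positive-definite `n × n` matrix.  For all indices `i, j`: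
`∫ xᵢ·xⱼ·exp (-(1/2)⟨x, Q·x⟩) dx = (2π)^{n/2} · (det Q)^{-1/2} · (Q⁻¹)ᵢⱼ`. -/
theorem gaussian_two_point_function (n : ℕ) (Q : Matrix (Fin n) (Fin n) ℝ)
    (hQ : Q.PosDef) (hQsymm : Q.IsSymm) (i j : Fin n) :
    ∫ x : EuclideanSpace ℝ (Fin n),
        x i * x j * Real.exp (-(1 / 2) * (x ⬝ᵥ Q.mulVec x))
      = (2 * π) ^ ((n : ℝ) / 2) * Q.det ^ (-(1 / 2) : ℝ) * Q⁻¹ i j := by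
  rw [← (PiLp.volume_preserving_toLp (Fin n)).integral_comp
    (MeasurableEquiv.toLp 2 _).measurableEmbedding]
  obtain ⟨A, hAQ⟩ : ∃ A : Matrix (Fin n) (Fin n) ℝ, Q = Aᵀ * A := by
    open scoped MatrixOrder ComplexOrder Matrix.Norms.L2Operator in
    simpa [star_eq_conjTranspose] using
      CStarAlgebra.nonneg_iff_eq_star_mul_self.mp hQ.posSemidef.nonneg
  have hdet : Q.det = A.det ^ 2 := by rw [hAQ, det_mul, det_transpose, sq]
  have hA : A.det ≠ 0 := fun h => hQ.det_pos.ne' (by rw [hdet, h, sq, zero_mul])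
  have hu : IsUnit A.det := hA.isUnit
  have key (x : Fin n → ℝ) : x i * x j * exp (-(1 / 2) * (x ⬝ᵥ Q *ᵥ x)) =
      (A⁻¹ *ᵥ (A *ᵥ x)) i * (A⁻¹ *ᵥ (A *ᵥ x)) j * exp (-(1 / 2) * ((A *ᵥ x) ⬝ᵥ (A *ᵥ x))) := by
    rw [mulVec_mulVec, nonsing_inv_mul _ hu, one_mulVec, hAQ, ← mulVec_mulVec,
      dotProduct_mulVec x, vecMul_transpose]
  simp_rw [key]
  rw [integral_comp_mulVec hA fun y => (A⁻¹ *ᵥ y) i * (A⁻¹ *ᵥ y) j * exp (-(1 / 2) * (y ⬝ᵥ y)),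
    integral_mulVec_mul_mulVec_mul_exp_neg_half_dotProduct, Fintype.card_fin,
    transpose_nonsing_inv, ← Matrix.mul_inv_rev, ← hAQ, hdet, rpow_neg (sq_nonneg _), ← sqrt_eq_rpow,
    sqrt_sq_eq_abs, sqrt_eq_rpow, ← rpow_mul_natCast (by positivity)]
  ring_nf
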